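/- arXiv:1905.12458 — 2 statements merged into one kernel-verified Lean document; each statement's English description precedes it below -/
import Mathlib

section
/- Fix n ≥ 1. Let R be the polynomial ring over ℂ in 4n(n+1) indeterminates a^{(1)}_{st}, a^{(2)}_{st} (1 ≤ s ≤ n+1, 1 ≤ t ≤ n) and b^{(1)}_{ts}, b^{(2)}_{ts} (1 ≤ t ≤ n, 1 ≤ s ≤ n+1), and let A_1, A_2 be the (n+1) × n matrices with entries a^{(1)}_{st}, a^{(2)}_{st} and B_1, B_2 the n × (n+1) matrices with entries b^{(1)}_{ts}, b^{(2)}_{ts}, regarded as matrices over R. Then the polynomial trace(A_1·B_1·A_2·B_2) − trace(A_1·B_2·A_2·B_1) ∈ R is squarefree (in particular nonzero). -/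
open MvPolynomial Matrix

/-- The indexing type for the `4n(n+1)` indeterminates: the left summand indexes the entries
`a^{(1)}_{st}, a^{(2)}_{st}` (with `1 ≤ s ≤ n+1`, `1 ≤ t ≤ n`), the right summand the entries
`b^{(1)}_{ts}, b^{(2)}_{ts}` (with `1 ≤ t ≤ n`, `1 ≤ s ≤ n+1`). -/
abbrev ConVar (n : ℕ) : Type :=
  (Fin 2 × Fin (n + 1) × Fin n) ⊕ (Fin 2 × Fin n × Fin (n + 1))

/-- The generic `(n+1) × n` matrix `A_k` (for `k = 1, 2`) whose entries are the
indeterminates `a^{(k)}_{st}`. -/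
noncomputable def Amat (n : ℕ) (k : Fin 2) :
    Matrix (Fin (n + 1)) (Fin n) (MvPolynomial (ConVar n) ℂ) :=
  Matrix.of fun s t => MvPolynomial.X (Sum.inl (k, s, t))

/-- The generic `n × (n+1)` matrix `B_k` (for `k = 1, 2`) whose entries are the
indeterminates `b^{(k)}_{ts}`. -/
noncomputable def Bmat (n : ℕ) (k : Fin 2) :
    Matrix (Fin n) (Fin (n + 1)) (MvPolynomial (ConVar n) ℂ) :=
  Matrix.of fun t s => MvPolynomial.X (Sum.inr (k, t, s))

/-- A squarefree-type monomial in four distinct variables has degree at most one in each. -/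
lemma degreeOf_four_le {σ : Type*} (i a b c d : σ) (hab : a ≠ b) (hac : a ≠ c) (had : a ≠ d)
    (hbc : b ≠ c) (hbd : b ≠ d) (hcd : c ≠ d) :
    degreeOf i (X a * X b * X c * X d : MvPolynomial σ ℂ) ≤ 1 := by
  classical
  have h1 := degreeOf_mul_le i (X a * X b * X c : MvPolynomial σ ℂ) (X d)
  have h2 := degreeOf_mul_le i (X a * X b : MvPolynomial σ ℂ) (X c)
  have h3 := degreeOf_mul_le i (X a : MvPolynomial σ ℂ) (X b)
  rw [degreeOf_X] at h1 h2 h3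
  rw [degreeOf_X] at h3
  grind

lemma degreeOf_trace_le (n : ℕ) (i : ConVar n) (k l : Fin 2) (h : k ≠ l) :
    degreeOf i (Amat n 0 * Bmat n k * Amat n 1 * Bmat n l).trace ≤ 1 := by
  simp only [Matrix.trace, Matrix.diag, Matrix.mul_apply, Finset.sum_mul, Amat, Bmat, Matrix.of_apply]
  refine (degreeOf_sum_le _ _ _).trans (Finset.sup_le fun s _ => ?_)
  refine (degreeOf_sum_le _ _ _).trans (Finset.sup_le fun t _ => ?_)
  refine (degreeOf_sum_le _ _ _).trans (Finset.sup_le fun u _ => ?_)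
  refine (degreeOf_sum_le _ _ _).trans (Finset.sup_le fun v _ => ?_)
  apply degreeOf_four_le <;> simp [h]

lemma superpotential_ne_zero (n : ℕ) (hn : 1 ≤ n) :
    (Amat n 0 * Bmat n 0 * Amat n 1 * Bmat n 1).trace
      - (Amat n 0 * Bmat n 1 * Amat n 1 * Bmat n 0).trace ≠ 0 := by
  obtain ⟨m, rfl⟩ : ∃ m, n = m + 1 := ⟨n - 1, by omega⟩
  intro h0
  let MA : Fin 2 → Matrix (Fin (m + 1 + 1)) (Fin (m + 1)) ℂ :=
    ![Matrix.single 0 0 1, Matrix.single 1 0 1]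
  let MB : Fin 2 → Matrix (Fin (m + 1)) (Fin (m + 1 + 1)) ℂ :=
    ![Matrix.single 0 1 1, Matrix.single 0 0 1]
  let φ : MvPolynomial (ConVar (m + 1)) ℂ →+* ℂ :=
    eval (Sum.elim (fun p => MA p.1 p.2.1 p.2.2) (fun p => MB p.1 p.2.1 p.2.2))
  have hA : ∀ k, (Amat (m + 1) k).map φ = MA k := by
    intro k; ext s t; simp [Amat, φ]
  have hB : ∀ k, (Bmat (m + 1) k).map φ = MB k := by
    intro k; ext s t; simp [Bmat, φ]
  have h1 := congrArg φ h0
  rw [map_sub, map_zero, AddMonoidHom.map_trace, AddMonoidHom.map_trace] at h1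
  simp only [Matrix.map_mul, hA, hB] at h1
  simp [MA, MB] at h1

/-- The trace of the Klebanov–Witten superpotential
`trace(A₁B₁A₂B₂) − trace(A₁B₂A₂B₁)` is a squarefree polynomial. -/
theorem conifold_superpotential_squarefree (n : ℕ) (hn : 1 ≤ n) :
    Squarefree ((Amat n 0 * Bmat n 0 * Amat n 1 * Bmat n 1).trace
      - (Amat n 0 * Bmat n 1 * Amat n 1 * Bmat n 0).trace) := by
  have hne := superpotential_ne_zero n hn
  have hdeg : ∀ i, degreeOf i ((Amat n 0 * Bmat n 0 * Amat n 1 * Bmat n 1).trace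
      - (Amat n 0 * Bmat n 1 * Amat n 1 * Bmat n 0).trace) ≤ 1 := fun i =>
    (degreeOf_sub_le i _ _).trans
      (max_le (degreeOf_trace_le n i 0 1 (by decide)) (degreeOf_trace_le n i 1 0 (by decide)))
  generalize (Amat n 0 * Bmat n 0 * Amat n 1 * Bmat n 1).trace
      - (Amat n 0 * Bmat n 1 * Amat n 1 * Bmat n 0).trace = f at hne hdeg
  rintro g ⟨q, rfl⟩
  have hq : q ≠ 0 := right_ne_zero_of_mul hne
  have hgg : g * g ≠ 0 := left_ne_zero_of_mul hne
  have hg : g ≠ 0 := left_ne_zero_of_mul hgg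
  have hz : ∀ i, degreeOf i g = 0 := by
    intro i
    have h := hdeg i
    rw [degreeOf_mul_eq hgg hq, degreeOf_mul_eq hg hg] at h
    omega
  have ht : g.totalDegree = 0 := by
    rw [totalDegree_eq_zero_iff]
    intro d hd i
    have := monomial_le_degreeOf i hd
    rw [hz i] at this
    omega
  rw [totalDegree_eq_zero_iff_eq_C] at ht
  rw [ht] at hg ⊢
  exact (IsUnit.mk0 _ fun h => hg (by rw [h, C_0])).map C
end

section
/- Let R = ℂ[x, y, z], let I_L = (x, y) and I_Z = (x², xy, y², xz, yz) be ideals of R, so that I_Z ⊆ I_L, and regard I_Z and the quotient I_L/I_Z as R-modules. Then the ℂ-vector space Hom_R(I_Z, I_L/I_Z) is finite dimensional of dimension 10. -/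
open MvPolynomial

noncomputable section

/-- The polynomial ring `ℂ[x, y, z]`, with `x = X 0`, `y = X 1`, `z = X 2`. -/
abbrev Rxyz : Type := MvPolynomial (Fin 3) ℂ

/-- The ideal `I_L = (x, y)`. -/
def IL : Ideal Rxyz := Ideal.span {X 0, X 1}

/-- The ideal `I_Z = (x², xy, y², xz, yz)`. -/
def IZ : Ideal Rxyz :=
  Ideal.span {X 0 * X 0, X 0 * X 1, X 1 * X 1, X 0 * X 2, X 1 * X 2}

/-- The quotient module `I_L / I_Z`, with `I_Z` regarded as a submodule of `I_L`. -/
abbrev ILmodIZ : Type := IL ⧸ (Submodule.comap IL.subtype IZ)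

/-- Exponents of the five generators of `I_Z`. -/
def expZ (i : Fin 5) : Fin 3 →₀ ℕ :=
  Finsupp.equivFunOnFinite.symm
    ((![![2, 0, 0], ![1, 1, 0], ![0, 2, 0], ![1, 0, 1], ![0, 1, 1]] : Fin 5 → Fin 3 → ℕ) i)

lemma expZ_le {i j : Fin 5} (h : expZ j ≤ expZ i) : j = i := by
  have h0 := h 0
  have h1 := h 1
  have h2 := h 2
  fin_cases i <;> fin_cases j <;> simp [expZ] at h0 h1 h2 ⊢

/-- The five generators of `I_Z`. -/
def genZ : Fin 5 → Rxyz :=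
  ![X 0 * X 0, X 0 * X 1, X 1 * X 1, X 0 * X 2, X 1 * X 2]

lemma genZ_eq (i : Fin 5) : genZ i = monomial (expZ i) 1 := by
  fin_cases i <;> simp [genZ, X, monomial_mul] <;> congr 1 <;> ext k <;>
    fin_cases k <;> simp [expZ, Finsupp.single_apply]

lemma IZ_eq : IZ = Ideal.span (Set.range genZ) := by
  unfold IZ genZ
  congr 1
  ext f
  simp
  tauto

lemma genZ_mem (i : Fin 5) : genZ i ∈ IZ := by
  rw [IZ_eq]
  exact Ideal.subset_span ⟨i, rfl⟩

lemma coeff_mul_mem_IZ {f : Rxyz} (hf : f ∈ IZ) (i : Fin 5) (r : Rxyz) :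
    coeff (expZ i) (r * f) = coeff 0 r * coeff (expZ i) f := by
  rw [IZ_eq] at hf
  induction hf using Submodule.span_induction generalizing r with
  | mem f hf =>
    obtain ⟨j, rfl⟩ := hf
    rw [genZ_eq, coeff_mul_monomial', coeff_monomial]
    by_cases h : j = i
    · subst h; simp
    · rw [if_neg (fun h' => h (expZ_le h')), if_neg]
      · simp
      · intro h'
        exact h (expZ_le h'.le)
  | zero => simp
  | add f g _ _ hf hg => rw [mul_add, coeff_add, coeff_add, hf, hg, mul_add]
  | smul a f _ hf =>
    rw [smul_eq_mul, ← mul_assoc, hf, hf, ← mul_assoc]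
    congr 1
    simp [← constantCoeff_eq]

lemma coeff_lin_IZ {f : Rxyz} (hf : f ∈ IZ) (i : Fin 3) :
    coeff (Finsupp.single i 1) f = 0 := by
  rw [IZ_eq] at hf
  induction hf using Submodule.span_induction with
  | mem f hf =>
    obtain ⟨j, rfl⟩ := hf
    rw [genZ_eq, coeff_monomial, if_neg]
    intro h
    have h0 := DFunLike.congr_fun h 0
    have h1 := DFunLike.congr_fun h 1
    have h2 := DFunLike.congr_fun h 2
    fin_cases i <;> fin_cases j <;> simp [expZ, Finsupp.single_apply] at h0 h1 h2
  | zero => simp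
  | add f g _ _ hf hg => rw [coeff_add, hf, hg, add_zero]
  | smul a f hf' _ =>
    clear * - hf'
    have key : ∀ r : Rxyz, coeff (Finsupp.single i 1) (r * f) = 0 := by
      induction hf' using Submodule.span_induction with
      | mem f hf =>
        obtain ⟨j, rfl⟩ := hf
        intro r
        rw [genZ_eq, coeff_mul_monomial', if_neg]
        intro h
        have h0 := h 0
        have h1 := h 1
        have h2 := h 2
        fin_cases i <;> fin_cases j <;> simp [expZ, Finsupp.single_apply] at h0 h1 h2
      | zero => simp
      | add f g _ _ hf hg => intro r; rw [mul_add, coeff_add, hf, hg, add_zero]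
      | smul b f _ hf => intro r; rw [smul_eq_mul, ← mul_assoc, hf]
    exact key a

lemma X_mul_mem {f : Rxyz} (hf : f ∈ IL) (i : Fin 3) : X i * f ∈ IZ := by
  obtain ⟨a, b, rfl⟩ := Ideal.mem_span_pair.1 hf
  have h0 : X 0 * X 0 ∈ IZ := genZ_mem 0
  have h1 : X 0 * X 1 ∈ IZ := genZ_mem 1
  have h2 : X 1 * X 1 ∈ IZ := genZ_mem 2
  have h3 : X 0 * X 2 ∈ IZ := genZ_mem 3
  have h4 : X 1 * X 2 ∈ IZ := genZ_mem 4
  fin_cases i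
  · have := IZ.add_mem (IZ.mul_mem_left a h0) (IZ.mul_mem_left b h1)
    convert this using 1
    simp only [Fin.zero_eta]; ring
  · have := IZ.add_mem (IZ.mul_mem_left a h1) (IZ.mul_mem_left b h2)
    convert this using 1
    simp only [Fin.mk_one]; ring
  · have := IZ.add_mem (IZ.mul_mem_left a h3) (IZ.mul_mem_left b h4)
    convert this using 1
    simp only [Fin.reduceFinMk]; ring

lemma X_smul_eq_zero (v : ILmodIZ) (i : Fin 3) : (X i : Rxyz) • v = 0 := by
  obtain ⟨⟨f, hf⟩, rfl⟩ := Submodule.Quotient.mk_surjective _ v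
  rw [← Submodule.Quotient.mk_smul, Submodule.Quotient.mk_eq_zero]
  exact X_mul_mem hf i

lemma smul_eq_coeff (r : Rxyz) (v : ILmodIZ) : r • v = coeff 0 r • v := by
  induction r using MvPolynomial.induction_on with
  | C a =>
    rw [coeff_zero_C, ← algebraMap_smul Rxyz a v]; rfl
  | add p q hp hq => rw [add_smul, hp, hq, coeff_add, add_smul]
  | mul_X p i _ =>
    rw [mul_smul, X_smul_eq_zero, smul_zero]
    simp [← constantCoeff_eq]

/-- Classes of `x`, `y` in `I_L / I_Z`. -/
def clL : Fin 2 → ILmodIZ :=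
  ![Submodule.Quotient.mk ⟨X 0, Ideal.subset_span (by simp)⟩,
    Submodule.Quotient.mk ⟨X 1, Ideal.subset_span (by simp)⟩]

/-- `ℂ² ≃ I_L / I_Z`. -/
def equivM : (Fin 2 → ℂ) ≃ₗ[ℂ] ILmodIZ :=
  LinearEquiv.ofBijective (Fintype.linearCombination ℂ clL) (by
    constructor
    · rw [injective_iff_map_eq_zero]
      intro c hc
      rw [Fintype.linearCombination_apply, Fin.sum_univ_two] at hc
      simp only [clL, Matrix.cons_val_zero, Matrix.cons_val_one] at hc
      rw [← Submodule.Quotient.mk_smul, ← Submodule.Quotient.mk_smul,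
        ← Submodule.Quotient.mk_add, Submodule.Quotient.mk_eq_zero] at hc
      have hc' : c 0 • X 0 + c 1 • X 1 ∈ IZ := hc
      have h0 := coeff_lin_IZ hc' 0
      have h1 := coeff_lin_IZ hc' 1
      simp [coeff_X, Finsupp.single_left_inj] at h0 h1
      ext k
      fin_cases k
      · exact h0
      · exact h1
    · intro v
      obtain ⟨⟨f, hf⟩, rfl⟩ := Submodule.Quotient.mk_surjective _ v
      obtain ⟨a, b, rfl⟩ := Ideal.mem_span_pair.1 hf
      refine ⟨![coeff 0 a, coeff 0 b], ?_⟩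
      rw [Fintype.linearCombination_apply, Fin.sum_univ_two]
      simp only [Matrix.cons_val_zero, Matrix.cons_val_one]
      rw [← smul_eq_coeff, ← smul_eq_coeff]
      rfl)

/-- Evaluation at generators. -/
def evalGen : (IZ →ₗ[Rxyz] ILmodIZ) →ₗ[ℂ] (Fin 5 → ILmodIZ) where
  toFun φ i := φ ⟨genZ i, genZ_mem i⟩
  map_add' _ _ := rfl
  map_smul' _ _ := rfl

/-- The homomorphism with prescribed values on generators. -/
def homOf (v : Fin 5 → ILmodIZ) : IZ →ₗ[Rxyz] ILmodIZ where
  toFun f := ∑ i, coeff (expZ i) (f : Rxyz) • v i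
  map_add' f g := by
    simp [add_smul, Finset.sum_add_distrib]
  map_smul' r f := by
    rw [RingHom.id_apply, smul_eq_coeff, Finset.smul_sum]
    refine Finset.sum_congr rfl fun i _ => ?_
    rw [smul_smul, ← coeff_mul_mem_IZ f.2]
    rfl

lemma homOf_gen (v : Fin 5 → ILmodIZ) (j : Fin 5) :
    homOf v ⟨genZ j, genZ_mem j⟩ = v j := by
  change ∑ i, coeff (expZ i) (genZ j) • v i = v j
  rw [Finset.sum_eq_single j]
  · rw [genZ_eq, coeff_monomial, if_pos rfl, one_smul]
  · intro i _ hij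
    rw [genZ_eq, coeff_monomial, if_neg, zero_smul]
    intro h
    exact hij (expZ_le h.le).symm
  · simp

lemma evalGen_injective : Function.Injective evalGen := by
  intro φ ψ h
  ext ⟨f, hf⟩
  have hf' := hf
  rw [IZ_eq] at hf'
  obtain ⟨c, hc⟩ := (Submodule.mem_span_range_iff_exists_fun Rxyz).1 hf'
  have : (⟨f, hf⟩ : IZ) = ∑ i, c i • ⟨genZ i, genZ_mem i⟩ := by
    apply Subtype.ext
    simp [← hc]
  rw [this, map_sum, map_sum]
  refine Finset.sum_congr rfl fun i _ => ?_
  rw [map_smul, map_smul]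
  congr 1
  exact congr_fun h i

/-- The main equivalence. -/
def equivHom : (IZ →ₗ[Rxyz] ILmodIZ) ≃ₗ[ℂ] (Fin 5 → ILmodIZ) :=
  LinearEquiv.ofBijective evalGen
    ⟨evalGen_injective, fun v => ⟨homOf v, funext (homOf_gen v)⟩⟩

/-- `I_Z ⊆ I_L`, and the `ℂ`-vector space `Hom_R(I_Z, I_L/I_Z)` is finite dimensional
of dimension `10`. -/
theorem hom_IZ_to_ILmodIZ_dim_ten :
    IZ ≤ IL ∧
    FiniteDimensional ℂ (IZ →ₗ[Rxyz] ILmodIZ) ∧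
    Module.finrank ℂ (IZ →ₗ[Rxyz] ILmodIZ) = 10 := by
  let e : (IZ →ₗ[Rxyz] ILmodIZ) ≃ₗ[ℂ] (Fin 5 → Fin 2 → ℂ) :=
    equivHom.trans (LinearEquiv.piCongrRight fun _ => equivM.symm)
  refine ⟨?_, Module.Finite.equiv e.symm, ?_⟩
  · rw [IZ_eq, Ideal.span_le]
    rintro _ ⟨i, rfl⟩
    have h0 : X 0 ∈ IL := Ideal.subset_span (by simp)
    have h1 : X 1 ∈ IL := Ideal.subset_span (by simp)
    fin_cases i
    · exact IL.mul_mem_right _ h0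
    · exact IL.mul_mem_right _ h0
    · exact IL.mul_mem_right _ h1
    · exact IL.mul_mem_right _ h0
    · exact IL.mul_mem_right _ h1
  · rw [e.finrank_eq, Module.finrank_pi_fintype]
    simp

end
end
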